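/- Let f be a nonzero real binary form of degree d whose complex rank equals k, where 2 ≤ k < ⌊d/2⌋ + 1. Then either the real rank of f equals k, or the real rank of f is at least d − k + 2. Moreover, when k = 2 and the real rank is not 2, the real rank equals exactly d − k + 2 = d. -/

import Mathlib

open MvPolynomial

noncomputable section

/-- The real linear binary form `a·x + b·y`. -/
def lin (a b : ℝ) : MvPolynomial (Fin 2) ℝ := C a * X 0 + C b * X 1

/-- `f` is a sum of `r` terms `cⱼ · ℓⱼ^d` with `ℓⱼ` nonzero real linear forms. -/
def HasDecomp (f : MvPolynomial (Fin 2) ℝ) (d r : ℕ) : Prop :=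
  ∃ c a b : Fin r → ℝ, (∀ j, (a j, b j) ≠ (0, 0)) ∧
    f = ∑ j, C (c j) * lin (a j) (b j) ^ d

/-- The real (symmetric) rank of a binary form of degree `d`:
the least number of `d`-th powers of real linear forms needed to write `f`. -/
def realRank (f : MvPolynomial (Fin 2) ℝ) (d : ℕ) : ℕ :=
  sInf {r | HasDecomp f d r}

/-- The set of real projective roots of a binary form. -/
def projRoots (f : MvPolynomial (Fin 2) ℝ) : Set (Projectivization ℝ (Fin 2 → ℝ)) :=
  {p | eval p.rep f = 0}

/-- `f` is a product of `d` pairwise non-proportional real linear forms,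
i.e. `f` has `d` distinct real roots. -/
def SplitsDistinct (f : MvPolynomial (Fin 2) ℝ) (d : ℕ) : Prop :=
  ∃ a b : Fin d → ℝ, (∀ j, (a j, b j) ≠ (0, 0)) ∧
    (∀ i j, i ≠ j → a i * b j ≠ a j * b i) ∧
    f = ∏ j, lin (a j) (b j)

/-- `f` has distinct roots, i.e. it is squarefree as a complex polynomial. -/
def SquarefreeC (f : MvPolynomial (Fin 2) ℝ) : Prop :=
  Squarefree (MvPolynomial.map (algebraMap ℝ ℂ) f)

/-- The linear change of variables of `f` by the matrix `A`: `f(A(x,y))`. -/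
def subst (A : Matrix (Fin 2) (Fin 2) ℝ) (f : MvPolynomial (Fin 2) ℝ) :
    MvPolynomial (Fin 2) ℝ :=
  aeval (fun i => C (A i 0) * X 0 + C (A i 1) * X 1) f

/-- The complex rank of a real binary form of degree `d`. -/
def complexRank (f : MvPolynomial (Fin 2) ℝ) (d : ℕ) : ℕ :=
  sInf {r | ∃ a b : Fin r → ℂ, (∀ j, (a j, b j) ≠ (0, 0)) ∧
    MvPolynomial.map (algebraMap ℝ ℂ) f = ∑ j, (C (a j) * X 0 + C (b j) * X 1) ^ d}

/-
Powers `ℓ ^ d` of at most `d + 1` pairwise non-proportional linear forms are linearly independent.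
Hence if a shortest decomposition of `f` and another one have at most `d + 1` terms together, every
form of the first is proportional to a form of the second. Applied to shortest decompositions over
`ℝ` and over `ℂ`, this makes them equally long unless their lengths add up to at least `d + 2`.

If the complex rank is two, apply the same principle to a shortest complex decomposition and its
conjugate: conjugation permutes the two forms up to scalars. Either both are real up to scalars, or
they are conjugate and `f` is the real part of a single power `ℓ ^ d`. Such a real part is a
combination of `d` powers of real forms, by averaging `(ζ ℓ + ℓ̄) ^ d` over the `d`-th roots of
unity `ζ`.
-/

section LinearForms

variable {R S : Type*} [CommRing R] [CommRing S]

/-- The binary linear form with coefficient vector `v`, as a linear function of `v`. -/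
def linForm : R × R →ₗ[R] MvPolynomial (Fin 2) R :=
  .coprod (.toSpanSingleton R _ (X 0)) (.toSpanSingleton R _ (X 1))

lemma linForm_apply (v : R × R) : linForm v = C v.1 * X 0 + C v.2 * X 1 := by
  simp [linForm, smul_eq_C_mul]

lemma lin_eq_linForm (a b : ℝ) : lin a b = linForm (a, b) :=
  (linForm_apply (a, b)).symm

lemma linForm_ne_zero {v : R × R} (hv : v ≠ 0) : linForm v ≠ 0 := by
  contrapose! hv
  have h₁ := congrArg (eval ![1, 0]) hv
  have h₂ := congrArg (eval ![0, 1]) hv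
  simp only [linForm_apply, map_add, map_mul, eval_C, eval_X, Matrix.cons_val_zero,
    Matrix.cons_val_one, mul_one, mul_zero, add_zero, zero_add, map_zero] at h₁ h₂
  exact Prod.ext h₁ h₂

lemma map_linForm (φ : R →+* S) (v : R × R) :
    map φ (linForm v) = linForm (Prod.map φ φ v) := by
  simp [linForm_apply]

/-- The determinant of two coefficient vectors. Over a field it vanishes exactly when the vectors,
and hence the corresponding linear forms, are proportional. -/
def wedge (u v : R × R) : R := u.1 * v.2 - u.2 * v.1

lemma neg_wedge (u v : R × R) : -wedge u v = wedge v u := by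
  simp [wedge, mul_comm]

lemma wedge_map (φ : R →+* S) (u v : R × R) :
    wedge (Prod.map φ φ u) (Prod.map φ φ v) = φ (wedge u v) := by
  simp [wedge]

/-- The derivation of `R[x, y]` along the zero line of `linForm u`; it kills `linForm u` and lowers
degrees by one. -/
def polarDerivation (u : R × R) :
    Derivation R (MvPolynomial (Fin 2) R) (MvPolynomial (Fin 2) R) :=
  mkDerivation R ![C u.2, C (-u.1)]

lemma polarDerivation_linForm (u v : R × R) :
    polarDerivation u (linForm v) = C (wedge v u) := by
  rw [linForm_apply, ← smul_eq_C_mul, ← smul_eq_C_mul, map_add, Derivation.map_smul,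
    Derivation.map_smul, polarDerivation, mkDerivation_X, mkDerivation_X]
  simp only [Matrix.cons_val_zero, Matrix.cons_val_one, smul_eq_C_mul, wedge, C_sub, C_mul, C_neg]
  ring

lemma polarDerivation_linForm_pow (u v : R × R) (n : ℕ) :
    polarDerivation u (linForm v ^ (n + 1)) = ((n + 1 : ℕ) * wedge v u) • linForm v ^ n := by
  rw [Derivation.leibniz_pow, polarDerivation_linForm, Nat.add_sub_cancel, smul_eq_C_mul, C_mul,
    map_natCast, smul_eq_mul, nsmul_eq_mul]
  ring

end LinearForms

section PowerSpans

variable {K L : Type*} [Field K] [Field L]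

lemma prodMap_ne_zero (φ : K →+* L) {v : K × K} (hv : v ≠ 0) : Prod.map φ φ v ≠ 0 := fun h =>
  hv (φ.injective.prodMap φ.injective (h.trans (Prod.ext (map_zero φ).symm (map_zero φ).symm)))

lemma exists_eq_smul_of_wedge_eq_zero {u v : K × K} (hv : v ≠ 0) (h : wedge u v = 0) :
    ∃ t : K, u = t • v := by
  obtain ⟨x, y⟩ := v
  have h : u.1 * y = u.2 * x := sub_eq_zero.1 h
  by_cases hx : x = 0
  · have hy : y ≠ 0 := by simpa [hx] using hv
    refine ⟨u.2 / y, Prod.ext ?_ (by simp [hy])⟩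
    simpa [hx, hy] using h
  · refine ⟨u.1 / x, Prod.ext (by simp [hx]) ?_⟩
    simp only [Prod.smul_mk, smul_eq_mul]
    field_simp
    exact h.symm

/-- The span of the `d`-th powers of the linear forms with coefficient vectors in `T`. -/
def powSpan (d : ℕ) (T : Set (K × K)) : Submodule K (MvPolynomial (Fin 2) K) :=
  Submodule.span K ((linForm · ^ d) '' T)

variable {d n : ℕ}

lemma powSpan_mono {S T : Set (K × K)} (h : S ⊆ T) : powSpan d S ≤ powSpan d T :=
  Submodule.span_mono (Set.image_mono h)

lemma linForm_pow_mem_powSpan {T : Set (K × K)} {v : K × K} (hv : v ∈ T) :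
    linForm v ^ d ∈ powSpan d T :=
  Submodule.subset_span (Set.mem_image_of_mem _ hv)

lemma smul_linForm_pow_mem_powSpan {T : Set (K × K)} {v : K × K} (t : K) (hv : v ∈ T) :
    linForm (t • v) ^ d ∈ powSpan d T := by
  rw [map_smul, smul_pow]
  exact Submodule.smul_mem _ _ (linForm_pow_mem_powSpan hv)

lemma map_mem_span (φ : K →+* L) {A : Set (MvPolynomial (Fin 2) K)}
    {f : MvPolynomial (Fin 2) K} (hf : f ∈ Submodule.span K A) :
    map φ f ∈ Submodule.span L (map φ '' A) := by
  induction hf using Submodule.span_induction with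
  | mem f hf => exact Submodule.subset_span (Set.mem_image_of_mem _ hf)
  | zero => simp
  | add f g _ _ hf hg => simpa using add_mem hf hg
  | smul c f _ hf =>
    rw [smul_eq_C_mul, map_mul, map_C, ← smul_eq_C_mul]
    exact Submodule.smul_mem _ _ hf

lemma map_image_linForm_pow (φ : K →+* L) (T : Set (K × K)) :
    map φ '' ((linForm · ^ d) '' T) = (linForm · ^ d) '' (Prod.map φ φ '' T) := by
  simp only [Set.image_image, map_pow, map_linForm]

lemma map_mem_powSpan (φ : K →+* L) {T : Set (K × K)} {f : MvPolynomial (Fin 2) K}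
    (hf : f ∈ powSpan d T) : map φ f ∈ powSpan d (Prod.map φ φ '' T) := by
  rw [powSpan, ← map_image_linForm_pow]
  exact map_mem_span φ hf

-- Differentiating along the zero line of one form of `T` kills its power and lowers `n` by one.
lemma linForm_pow_notMem_powSpan [CharZero K] {v : K × K} (hv : v ≠ 0) {T : Finset (K × K)}
    (hT : ∀ u ∈ T, wedge v u ≠ 0) (hcard : T.card ≤ n) : linForm v ^ n ∉ powSpan n T := by
  classical
  induction T using Finset.induction generalizing n with
  | empty => simpa [powSpan] using pow_ne_zero n (linForm_ne_zero hv)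
  | insert u T hu ih =>
    rw [Finset.card_insert_of_notMem hu] at hcard
    obtain ⟨m, rfl⟩ := Nat.exists_eq_succ_of_ne_zero (by omega : n ≠ 0)
    intro hmem
    have hle : powSpan (m + 1) (insert u T : Finset (K × K)) ≤
        (powSpan m (T : Set (K × K))).comap (polarDerivation u).toLinearMap := by
      refine Submodule.span_le.2 (Set.image_subset_iff.2 fun w hw => ?_)
      change polarDerivation u (linForm w ^ (m + 1)) ∈ powSpan m (T : Set (K × K))
      rw [polarDerivation_linForm_pow]
      obtain rfl | hw := Finset.mem_insert.1 hw
      · simp [wedge, mul_comm]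
      · exact Submodule.smul_mem _ _ (linForm_pow_mem_powSpan hw)
    have hderiv : ((m + 1 : ℕ) * wedge v u) • linForm v ^ m ∈ powSpan m (T : Set (K × K)) := by
      rw [← polarDerivation_linForm_pow]
      exact hle hmem
    have hscalar : ((m + 1 : ℕ) * wedge v u : K) ≠ 0 :=
      mul_ne_zero (Nat.cast_ne_zero.2 m.succ_ne_zero) (hT u (Finset.mem_insert_self _ _))
    exact ih (fun w hw => hT w (Finset.mem_insert_of_mem hw)) (by omega)
      ((Submodule.smul_mem_iff _ hscalar).1 hderiv)

end PowerSpans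

section WaringRank

variable {K L : Type*} [Field K] [Field L] {d : ℕ} {f : MvPolynomial (Fin 2) K}

/-- The Waring rank of `f` over `K`: the least number of linear forms over `K` whose `d`-th powers
span a space containing `f`. It is `0` if `f` is not a combination of such powers. -/
def waringRank (d : ℕ) (f : MvPolynomial (Fin 2) K) : ℕ :=
  sInf {r | ∃ T : Finset (K × K), T.card = r ∧ f ∈ powSpan d (T : Set (K × K))}

lemma waringRank_le_card {T : Finset (K × K)} (hT : f ∈ powSpan d (T : Set (K × K))) :
    waringRank d f ≤ T.card :=
  Nat.sInf_le ⟨T, rfl, hT⟩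

/-- `T` is a set of linear forms over `K` of the least possible size whose `d`-th powers
span a space containing `f`. -/
structure IsMinimalDecomp (d : ℕ) (f : MvPolynomial (Fin 2) K) (T : Finset (K × K)) : Prop where
  mem : f ∈ powSpan d (T : Set (K × K))
  card_eq : T.card = waringRank d f

lemma exists_isMinimalDecomp (hf : f ∈ powSpan d (Set.univ : Set (K × K))) :
    ∃ T, IsMinimalDecomp d f T := by
  obtain ⟨T, -, c, hc⟩ := (Submodule.mem_span_image_iff_exists_fun K).1 hf
  have hT : f ∈ powSpan d (T : Set (K × K)) :=
    (Submodule.mem_span_image_finset_iff_exists_fun K).2 ⟨c, hc⟩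
  obtain ⟨T₀, hcard, hT₀⟩ := Nat.sInf_mem (⟨_, T, rfl, hT⟩ :
    {r | ∃ T : Finset (K × K), T.card = r ∧ f ∈ powSpan d (T : Set (K × K))}.Nonempty)
  exact ⟨T₀, hT₀, hcard⟩

lemma mem_powSpan_univ_of_waringRank_ne_zero (h : waringRank d f ≠ 0) :
    f ∈ powSpan d (Set.univ : Set (K × K)) := by
  obtain ⟨-, T, -, hT⟩ := Nat.nonempty_of_pos_sInf (Nat.pos_of_ne_zero h)
  exact powSpan_mono (Set.subset_univ _) hT

namespace IsMinimalDecomp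

variable {T : Finset (K × K)}

lemma notMem_powSpan_erase [DecidableEq K] (h : IsMinimalDecomp d f T) {v : K × K} (hv : v ∈ T) :
    f ∉ powSpan d (T.erase v : Finset (K × K)) := fun hf =>
  ((waringRank_le_card hf).trans_lt (Finset.card_erase_lt_of_mem hv)).ne' h.card_eq

lemma linForm_pow_notMem_powSpan_erase [DecidableEq K] (h : IsMinimalDecomp d f T) {v : K × K}
    (hv : v ∈ T) :
    linForm v ^ d ∉ powSpan d (T.erase v : Finset (K × K)) := fun hmem => by
  refine h.notMem_powSpan_erase hv (Submodule.span_le.2 (Set.image_subset_iff.2 fun u hu => ?_)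
    h.mem)
  obtain rfl | hne := eq_or_ne u v
  · exact hmem
  · exact linForm_pow_mem_powSpan (Finset.mem_erase.2 ⟨hne, hu⟩)

lemma zero_notMem (h : IsMinimalDecomp d f T) (hd : d ≠ 0) : (0 : K × K) ∉ T := fun h₀ => by
  classical
  exact h.linForm_pow_notMem_powSpan_erase h₀ (by simp [hd])

lemma wedge_ne_zero (h : IsMinimalDecomp d f T) (hd : d ≠ 0) {u v : K × K} (hu : u ∈ T)
    (hv : v ∈ T) (huv : u ≠ v) : wedge u v ≠ 0 := fun hw => by
  classical
  obtain ⟨t, rfl⟩ := exists_eq_smul_of_wedge_eq_zero (ne_of_mem_of_not_mem hv (h.zero_notMem hd)) hw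
  exact h.linForm_pow_notMem_powSpan_erase hu
    (smul_linForm_pow_mem_powSpan t (Finset.mem_erase.2 ⟨huv.symm, hv⟩))

lemma linForm_pow_mem_span_insert [DecidableEq K] (h : IsMinimalDecomp d f T) {v : K × K}
    (hv : v ∈ T) :
    linForm v ^ d ∈
      Submodule.span K (insert f ((linForm · ^ d) '' (T.erase v : Finset (K × K)))) := by
  refine mem_span_insert_exchange ?_ (h.notMem_powSpan_erase hv)
  rw [← Set.image_insert_eq (f := (linForm · ^ d)), ← Finset.coe_insert, Finset.insert_erase hv]
  exact h.mem

-- Were `v` not proportional to any form of `S`, its power would be a combination of at most `d`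
-- powers of forms not proportional to it.
theorem exists_wedge_map_eq_zero [CharZero L] (h : IsMinimalDecomp d f T) (hd : d ≠ 0)
    (φ : K →+* L) {S : Finset (L × L)} (hS : map φ f ∈ powSpan d (S : Set (L × L)))
    (hcard : S.card + T.card ≤ d + 1) {v : K × K} (hv : v ∈ T) :
    ∃ s ∈ S, wedge (Prod.map φ φ v) s = 0 := by
  classical
  by_contra! hS'
  let U : Finset (L × L) := S ∪ (T.erase v).image (Prod.map φ φ)
  have hU : ∀ u ∈ U, wedge (Prod.map φ φ v) u ≠ 0 := by
    intro u hu
    obtain hu | hu := Finset.mem_union.1 hu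
    · exact hS' u hu
    · obtain ⟨w, hw, rfl⟩ := Finset.mem_image.1 hu
      obtain ⟨hwv, hw⟩ := Finset.mem_erase.1 hw
      rw [wedge_map]
      exact (map_ne_zero φ).2 (h.wedge_ne_zero hd hv hw hwv.symm)
  have hUcard : U.card ≤ d := by
    have h₁ : U.card ≤ S.card + ((T.erase v).image (Prod.map φ φ)).card := Finset.card_union_le _ _
    have h₂ : ((T.erase v).image (Prod.map φ φ)).card ≤ (T.erase v).card := Finset.card_image_le
    have h₃ := Finset.card_erase_add_one hv
    omega
  have hv₀ : Prod.map φ φ v ≠ 0 :=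
    prodMap_ne_zero φ (ne_of_mem_of_not_mem hv (h.zero_notMem hd))
  refine linForm_pow_notMem_powSpan hv₀ hU hUcard ?_
  have hmem := map_mem_span φ (h.linForm_pow_mem_span_insert hv)
  rw [map_pow, map_linForm, Set.image_insert_eq, map_image_linForm_pow, ← Finset.coe_image] at hmem
  refine Submodule.span_le.2 (Set.insert_subset ?_ ?_) hmem
  · exact powSpan_mono (by simp [U]) hS
  · exact Submodule.subset_span.trans (powSpan_mono (by simp [U]))

end IsMinimalDecomp

lemma waringRank_map_le (φ : K →+* L) (hf : f ∈ powSpan d (Set.univ : Set (K × K))) :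
    waringRank d (map φ f) ≤ waringRank d f := by
  classical
  obtain ⟨T, hT⟩ := exists_isMinimalDecomp hf
  have hmap : map φ f ∈ powSpan d (T.image (Prod.map φ φ) : Finset (L × L)) := by
    rw [Finset.coe_image]
    exact map_mem_powSpan φ hT.mem
  exact (waringRank_le_card hmap).trans (Finset.card_image_le.trans hT.card_eq.le)

-- Two forms proportional to a common form are proportional, so sending each form of a shortest
-- decomposition over `K` to a proportional form over `L` is injective.
theorem waringRank_map_eq_or_le [CharZero L] (φ : K →+* L) (hd : d ≠ 0)
    (hf : f ∈ powSpan d (Set.univ : Set (K × K))) :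
    waringRank d (map φ f) = waringRank d f ∨
      d + 2 ≤ waringRank d (map φ f) + waringRank d f := by
  classical
  obtain ⟨T, hT⟩ := exists_isMinimalDecomp hf
  obtain ⟨S, hS⟩ := exists_isMinimalDecomp
    (powSpan_mono (Set.subset_univ _) (map_mem_powSpan φ hf))
  have hle := waringRank_map_le φ hf
  rw [← hT.card_eq, ← hS.card_eq] at hle ⊢
  by_contra! hlt
  choose! s hsS hs using fun v hv => hT.exists_wedge_map_eq_zero hd φ hS.mem (by omega) (v := v) hv
  obtain ⟨u, hu, v, hv, huv, hsuv⟩ :=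
    Finset.exists_ne_map_eq_of_card_lt_of_maps_to (by omega : S.card < T.card) hsS
  have hs₀ : s u ≠ 0 := ne_of_mem_of_not_mem (hsS u hu) (hS.zero_notMem hd)
  obtain ⟨a, ha⟩ := exists_eq_smul_of_wedge_eq_zero hs₀ (hs u hu)
  obtain ⟨b, hb⟩ := exists_eq_smul_of_wedge_eq_zero hs₀ (hsuv ▸ hs v hv)
  refine hT.wedge_ne_zero hd hu hv huv (φ.injective ?_)
  rw [map_zero, ← wedge_map, ha, hb]
  simp only [wedge, Prod.smul_fst, Prod.smul_snd, smul_eq_mul]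
  ring

end WaringRank

section RealPart

open scoped ComplexConjugate

variable {σ : Type*}

/-- The coefficientwise real part of a complex polynomial, an `ℝ`-linear left inverse of the
inclusion of real polynomials; it turns complex decompositions into real ones. -/
def rePart : MvPolynomial σ ℂ →ₗ[ℝ] MvPolynomial σ ℝ where
  toFun := AddMonoidAlgebra.map Complex.reAddGroupHom
  map_add' F G := by ext m; exact Complex.add_re (coeff m F) (coeff m G)
  map_smul' r F := by ext m; exact Complex.smul_re r (coeff m F)

lemma coeff_rePart (m : σ →₀ ℕ) (F : MvPolynomial σ ℂ) :
    coeff m (rePart F) = (coeff m F).re := rfl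

lemma rePart_smul_map (z : ℂ) (g : MvPolynomial σ ℝ) :
    rePart (z • map (algebraMap ℝ ℂ) g) = z.re • g := by
  ext m
  simp [coeff_rePart, coeff_map]

lemma rePart_map (g : MvPolynomial σ ℝ) : rePart (map (algebraMap ℝ ℂ) g) = g := by
  simpa using rePart_smul_map 1 g

lemma rePart_map_conj (F : MvPolynomial σ ℂ) : rePart (map conj F) = rePart F := by
  ext m
  simp [coeff_rePart, coeff_map]

lemma map_conj_map (g : MvPolynomial σ ℝ) :
    map conj (map (algebraMap ℝ ℂ) g) = map (algebraMap ℝ ℂ) g := by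
  ext m
  simp [coeff_map]

lemma rePart_mem_of_mem_span {A : Set (MvPolynomial σ ℂ)}
    {M : Submodule ℝ (MvPolynomial σ ℝ)} (hA : ∀ F ∈ A, ∀ z : ℂ, rePart (z • F) ∈ M)
    {F : MvPolynomial σ ℂ} (hF : F ∈ Submodule.span ℂ A) : rePart F ∈ M := by
  suffices h : ∀ z : ℂ, rePart (z • F) ∈ M by simpa using h 1
  induction hF using Submodule.span_induction with
  | mem F hF => exact hA F hF
  | zero => simp
  | add F G _ _ hF hG => exact fun z => by simpa using add_mem (hF z) (hG z)
  | smul w F _ hF => exact fun z => by simpa [smul_smul] using hF (z * w)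

end RealPart

section RootsOfUnity

variable {R : Type*} [CommRing R] [IsDomain R] {ζ : R} {d : ℕ}

lemma sum_primitiveRoot_pow_pow (hζ : IsPrimitiveRoot ζ d) (m : ℕ) :
    ∑ j ∈ Finset.range d, (ζ ^ j) ^ m = if d ∣ m then (d : R) else 0 := by
  simp only [pow_right_comm ζ _ m]
  split_ifs with h
  · simp [hζ.pow_eq_one_iff_dvd m |>.2 h]
  · have hgeom : (∑ j ∈ Finset.range d, (ζ ^ m) ^ j) * (ζ ^ m - 1) = 0 := by
      rw [geom_sum_mul, pow_right_comm, hζ.pow_eq_one, one_pow, sub_self]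
    exact (mul_eq_zero.1 hgeom).resolve_right
      (sub_ne_zero.2 fun h₁ => h ((hζ.pow_eq_one_iff_dvd m).1 h₁))

lemma sum_primitiveRoot_mul_add_pow (hd : d ≠ 0) (hζ : IsPrimitiveRoot ζ d) (a b : R) :
    ∑ j ∈ Finset.range d, (ζ ^ j * a + b) ^ d = d * (a ^ d + b ^ d) := by
  have hexpand : ∑ j ∈ Finset.range d, (ζ ^ j * a + b) ^ d =
      ∑ m ∈ Finset.range (d + 1),
        (if d ∣ m then (d : R) else 0) * (a ^ m * b ^ (d - m) * d.choose m) := by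
    simp only [← sum_primitiveRoot_pow_pow hζ, Finset.sum_mul, add_pow, mul_pow]
    rw [Finset.sum_comm]
    simp only [mul_assoc]
  rw [hexpand, Finset.sum_range_succ, Finset.sum_eq_single_of_mem 0 (by simpa using hd.pos)]
  · simp only [dvd_zero, dvd_refl, if_true, pow_zero, Nat.sub_zero, Nat.sub_self,
      Nat.choose_zero_right, Nat.choose_self, Nat.cast_one]
    ring
  · intro m hm hm₀
    rw [if_neg fun h => hm₀ (Nat.eq_zero_of_dvd_of_lt h (Finset.mem_range.1 hm)), zero_mul]

end RootsOfUnity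

section RealForms

open scoped ComplexConjugate

variable {d : ℕ}

-- With `ω` a primitive `2 d`-th root of unity, `2 Re (ω ^ j u) = ω⁻¹ ^ j (ω ^ (2 j) u + ū)`, and
-- `ω⁻¹ ^ j` has `d`-th power `(-1) ^ j`, while `ω ^ 2` is a primitive `d`-th root of unity.
lemma exists_sum_neg_one_pow_smul_linForm_pow_eq (hd : d ≠ 0) (u : ℂ × ℂ) :
    ∃ x : ℕ → ℝ × ℝ,
      ∑ j ∈ Finset.range d, (-1 : ℝ) ^ j • map (algebraMap ℝ ℂ) (linForm (x j) ^ d) =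
        (d : ℝ) • (linForm u ^ d + map conj (linForm u ^ d)) := by
  obtain ⟨ω, hω⟩ : ∃ ω : ℂ, IsPrimitiveRoot ω (2 * d) :=
    ⟨_, Complex.isPrimitiveRoot_exp _ (by omega)⟩
  have hζ : IsPrimitiveRoot (ω ^ 2) d := hω.pow (by omega) rfl
  have hωd : ω ^ d = -1 := (hω.pow (by omega) (mul_comm 2 d)).eq_neg_one_of_two_right
  have hωconj : ω⁻¹ = conj ω := Complex.inv_eq_conj (hω.norm'_eq_one (by omega))
  have hω₂ : ω⁻¹ * ω ^ 2 = ω := by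
    rw [pow_two, inv_mul_cancel_left₀ (hω.ne_zero (by omega))]
  let x : ℕ → ℝ × ℝ := fun j => (2 * (ω ^ j * u.1).re, 2 * (ω ^ j * u.2).re)
  have hre (j : ℕ) (z : ℂ) :
      ((2 * (ω ^ j * z).re : ℝ) : ℂ) = ω⁻¹ ^ j * ((ω ^ 2) ^ j * z + conj z) := by
    rw [mul_add, ← mul_assoc, ← mul_pow, hω₂, hωconj, ← map_pow, ← map_mul, Complex.add_conj]
  have hform (j : ℕ) : map (algebraMap ℝ ℂ) (linForm (x j)) =
      C (ω⁻¹ ^ j) * (C (ω ^ 2) ^ j * linForm u + map conj (linForm u)) := by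
    rw [map_linForm, map_linForm]
    simp only [linForm_apply, Prod.map, x, Complex.coe_algebraMap, hre, C_mul, C_add, C_pow]
    ring
  have hsign (j : ℕ) : (-1 : ℝ) ^ j • (C (ω⁻¹ ^ j) : MvPolynomial (Fin 2) ℂ) ^ d = 1 := by
    rw [← C_pow, pow_right_comm, inv_pow, hωd, inv_neg_one, C_pow, C_neg, C_1,
      Algebra.smul_def, map_pow, map_neg, map_one, ← mul_pow, neg_one_mul, neg_neg, one_pow]
  refine ⟨x, ?_⟩
  simp only [map_pow _ (linForm _), hform, mul_pow _ (_ + _), ← smul_mul_assoc, hsign, one_mul]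
  rw [sum_primitiveRoot_mul_add_pow hd (hζ.map_of_injective (C_injective (Fin 2) ℂ)),
    Nat.cast_smul_eq_nsmul, nsmul_eq_mul]

lemma exists_rePart_linForm_pow_mem_powSpan (hd : d ≠ 0) (u : ℂ × ℂ) :
    ∃ T : Finset (ℝ × ℝ), T.card ≤ d ∧ rePart (linForm u ^ d) ∈ powSpan d (T : Set (ℝ × ℝ)) := by
  classical
  obtain ⟨x, hx⟩ := exists_sum_neg_one_pow_smul_linForm_pow_eq hd u
  have hsum : ((d : ℝ) * 2) • rePart (linForm u ^ d) =
      ∑ j ∈ Finset.range d, (-1 : ℝ) ^ j • linForm (x j) ^ d := by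
    have hre := congrArg rePart hx
    simp only [map_sum, map_smul, map_add, rePart_map, rePart_map_conj, ← two_smul ℝ,
      smul_smul] at hre
    exact hre.symm
  have hd₂ : (d : ℝ) * 2 ≠ 0 := mul_ne_zero (Nat.cast_ne_zero.2 hd) two_ne_zero
  refine ⟨(Finset.range d).image x, Finset.card_image_le.trans (Finset.card_range d).le,
    (Submodule.smul_mem_iff _ hd₂).1 ?_⟩
  rw [hsum]
  exact sum_mem fun j hj => Submodule.smul_mem _ _
    (linForm_pow_mem_powSpan (Finset.mem_image_of_mem x hj))

lemma exists_rePart_smul_linForm_pow_mem_powSpan (hd : d ≠ 0) (z : ℂ) (u : ℂ × ℂ) :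
    ∃ T : Finset (ℝ × ℝ), T.card ≤ d ∧
      rePart (z • linForm u ^ d) ∈ powSpan d (T : Set (ℝ × ℝ)) := by
  obtain ⟨w, rfl⟩ := IsAlgClosed.exists_pow_nat_eq z hd.pos
  rw [← smul_pow, ← map_smul]
  exact exists_rePart_linForm_pow_mem_powSpan hd _

lemma mem_powSpan_univ_of_map_mem (hd : d ≠ 0) {f : MvPolynomial (Fin 2) ℝ}
    (hf : map (algebraMap ℝ ℂ) f ∈ powSpan d (Set.univ : Set (ℂ × ℂ))) :
    f ∈ powSpan d (Set.univ : Set (ℝ × ℝ)) := by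
  rw [← rePart_map f]
  refine rePart_mem_of_mem_span (Set.forall_mem_image.2 fun u _ z => ?_) hf
  obtain ⟨T, -, hT⟩ := exists_rePart_smul_linForm_pow_mem_powSpan hd z u
  exact powSpan_mono (Set.subset_univ _) hT

lemma waringRank_rePart_le (hd : d ≠ 0) {u : ℂ × ℂ} {F : MvPolynomial (Fin 2) ℂ}
    (hF : F ∈ powSpan d {u, Prod.map conj conj u}) :
    waringRank d (rePart F) ≤ d := by
  rw [powSpan, Set.image_pair, Submodule.mem_span_pair] at hF
  obtain ⟨α, β, rfl⟩ := hF
  have hconj : β • linForm (Prod.map conj conj u) ^ d =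
      map conj (conj β • linForm u ^ d) := by
    rw [smul_eq_C_mul, smul_eq_C_mul, map_mul, map_C, Complex.conj_conj, map_pow, map_linForm]
  rw [hconj, map_add, rePart_map_conj, ← map_add, ← add_smul]
  obtain ⟨T, hcard, hT⟩ := exists_rePart_smul_linForm_pow_mem_powSpan hd (α + conj β) u
  exact (waringRank_le_card hT).trans hcard

lemma exists_eq_smul_map_of_wedge_conj_eq_zero {v : ℂ × ℂ}
    (hv : wedge (Prod.map conj conj v) v = 0) :
    ∃ (t : ℂ) (x : ℝ × ℝ), v = t • Prod.map (algebraMap ℝ ℂ) (algebraMap ℝ ℂ) x := by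
  obtain ⟨a, b⟩ := v
  have hab : conj a * b = conj b * a := sub_eq_zero.1 hv
  by_cases ha : a = 0
  · exact ⟨b, (0, 1), by simp [ha]⟩
  · have ha' : conj a ≠ 0 := (map_ne_zero _).2 ha
    have hreal : conj (b / a) = b / a := by
      rw [map_div₀, div_eq_div_iff ha' ha, ← hab, mul_comm]
    obtain ⟨y, hy⟩ := Complex.conj_eq_iff_real.1 hreal
    exact ⟨a, (1, y), by simp [← hy, mul_div_cancel₀ _ ha]⟩

lemma waringRank_le_card_of_wedge_conj_eq_zero {f : MvPolynomial (Fin 2) ℝ} {S : Finset (ℂ × ℂ)}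
    (hf : map (algebraMap ℝ ℂ) f ∈ powSpan d (S : Set (ℂ × ℂ)))
    (hS : ∀ v ∈ S, wedge (Prod.map conj conj v) v = 0) :
    waringRank d f ≤ S.card := by
  classical
  choose! t x hx using fun v hv => exists_eq_smul_map_of_wedge_conj_eq_zero (hS v hv)
  have hmem : f ∈ powSpan d (S.image x : Set (ℝ × ℝ)) := by
    rw [← rePart_map f]
    refine rePart_mem_of_mem_span (Set.forall_mem_image.2 fun v hv z => ?_) hf
    rw [hx v hv, map_smul linForm, smul_pow, smul_smul, ← map_linForm, ← map_pow, rePart_smul_map]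
    exact Submodule.smul_mem _ _ (linForm_pow_mem_powSpan (by simpa using ⟨v.1, v.2, hv, rfl⟩))
  exact (waringRank_le_card hmem).trans Finset.card_image_le

-- Conjugation permutes the two forms up to scalars and does not fix `v`, so it swaps them.
lemma waringRank_le_of_wedge_conj_ne_zero (hd : 3 ≤ d) {f : MvPolynomial (Fin 2) ℝ}
    {S : Finset (ℂ × ℂ)} (hS : IsMinimalDecomp d (map (algebraMap ℝ ℂ) f) S) (hcard : S.card = 2)
    {v : ℂ × ℂ} (hv : v ∈ S) (hvv : wedge (Prod.map conj conj v) v ≠ 0) :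
    waringRank d f ≤ d := by
  have hd₀ : d ≠ 0 := by omega
  obtain ⟨s, hs, hvs⟩ := hS.exists_wedge_map_eq_zero hd₀ conj
    ((map_conj_map f).symm ▸ hS.mem) (by omega) hv
  have hvs_ne : v ≠ s := fun h => hvv (h ▸ hvs)
  have hS_eq : S = {v, s} := (Finset.eq_of_subset_of_card_le
    (Finset.insert_subset hv (Finset.singleton_subset_iff.2 hs))
    (by rw [hcard, Finset.card_pair hvs_ne])).symm
  have hv₀ : v ≠ 0 := ne_of_mem_of_not_mem hv (hS.zero_notMem hd₀)
  obtain ⟨t, rfl⟩ := exists_eq_smul_of_wedge_eq_zero (prodMap_ne_zero conj hv₀)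
    (by rw [← neg_wedge, hvs, neg_zero])
  rw [← rePart_map f]
  refine waringRank_rePart_le (u := v) hd₀ (Submodule.span_le.2 (Set.image_subset_iff.2 ?_) hS.mem)
  rw [hS_eq, Finset.coe_pair]
  exact Set.insert_subset (linForm_pow_mem_powSpan (by simp))
    (Set.singleton_subset_iff.2 (smul_linForm_pow_mem_powSpan t (by simp)))

theorem waringRank_eq_two_or_eq (hd : 3 ≤ d) {f : MvPolynomial (Fin 2) ℝ}
    (hf : waringRank d (map (algebraMap ℝ ℂ) f) = 2) :
    waringRank d f = 2 ∨ waringRank d f = d := by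
  have hd₀ : d ≠ 0 := by omega
  have hfℂ : map (algebraMap ℝ ℂ) f ∈ powSpan d (Set.univ : Set (ℂ × ℂ)) :=
    mem_powSpan_univ_of_waringRank_ne_zero (by omega)
  have hfℝ := mem_powSpan_univ_of_map_mem hd₀ hfℂ
  obtain ⟨S, hS⟩ := exists_isMinimalDecomp hfℂ
  have hcard : S.card = 2 := hS.card_eq.trans hf
  by_cases hreal : ∀ v ∈ S, wedge (Prod.map conj conj v) v = 0
  · have hle := waringRank_le_card_of_wedge_conj_eq_zero hS.mem hreal
    have hge := waringRank_map_le (algebraMap ℝ ℂ) hfℝ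
    omega
  · push Not at hreal
    obtain ⟨v, hv, hvv⟩ := hreal
    have hle := waringRank_le_of_wedge_conj_ne_zero hd hS hcard hv hvv
    have hge := waringRank_map_eq_or_le (algebraMap ℝ ℂ) hd₀ hfℝ
    omega

end RealForms

section Ranks

variable {K : Type*} [Field K] {d : ℕ}

lemma sum_smul_linForm_pow_mem_powSpan [DecidableEq K] {r : ℕ} (c : Fin r → K) (v : Fin r → K × K) :
    ∑ j, c j • linForm (v j) ^ d ∈ powSpan d (Finset.univ.image v : Set (K × K)) :=
  sum_mem fun j _ => Submodule.smul_mem _ _ (linForm_pow_mem_powSpan (by simp))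

lemma exists_sum_smul_linForm_pow_eq (hd : d ≠ 0) {f : MvPolynomial (Fin 2) K} {T : Finset (K × K)}
    (hf : f ∈ powSpan d (T : Set (K × K))) :
    ∃ r ≤ T.card, ∃ (c : Fin r → K) (v : Fin r → K × K),
      (∀ j, c j ≠ 0) ∧ (∀ j, v j ≠ 0) ∧ ∑ j, c j • linForm (v j) ^ d = f := by
  classical
  obtain ⟨c, rfl⟩ := (Submodule.mem_span_image_finset_iff_exists_fun' K).1 hf
  let U := T.filter fun v => c v • linForm v ^ d ≠ 0
  have hU (j : Fin U.card) : c (U.equivFin.symm j) • linForm (U.equivFin.symm j).1 ^ d ≠ 0 :=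
    (Finset.mem_filter.1 (U.equivFin.symm j).2).2
  refine ⟨U.card, Finset.card_filter_le _ _, fun j => c (U.equivFin.symm j),
    fun j => U.equivFin.symm j, fun j h => hU j (by simp [h]),
    fun j h => hU j (by simp [h, hd]), ?_⟩
  rw [U.equivFin.symm.sum_comp fun v : U => c v • linForm v.1 ^ d,
    Finset.sum_coe_sort U fun v => c v • linForm v ^ d, Finset.sum_filter_ne_zero]

lemma realRank_eq_waringRank (hd : d ≠ 0) (f : MvPolynomial (Fin 2) ℝ) :
    realRank f d = waringRank d f := by
  classical
  refine csInf_eq_csInf_of_forall_exists_le ?_ ?_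
  · rintro r ⟨c, a, b, -, rfl⟩
    simp only [lin_eq_linForm, ← smul_eq_C_mul]
    exact ⟨_, ⟨_, rfl, sum_smul_linForm_pow_mem_powSpan c fun j => (a j, b j)⟩,
      by simpa using Finset.card_image_le (s := .univ) (f := fun j => (a j, b j))⟩
  · rintro _ ⟨T, rfl, hT⟩
    obtain ⟨r, hr, c, v, -, hv, rfl⟩ := exists_sum_smul_linForm_pow_eq hd hT
    exact ⟨r, ⟨c, fun j => (v j).1, fun j => (v j).2, hv, by
      simp only [lin_eq_linForm, smul_eq_C_mul]⟩, hr⟩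

lemma complexRank_eq_waringRank (hd : d ≠ 0) (f : MvPolynomial (Fin 2) ℝ) :
    complexRank f d = waringRank d (map (algebraMap ℝ ℂ) f) := by
  classical
  refine csInf_eq_csInf_of_forall_exists_le ?_ ?_
  · rintro r ⟨a, b, -, hf⟩
    have hsum : map (algebraMap ℝ ℂ) f = ∑ j, (1 : ℂ) • linForm (a j, b j) ^ d := by
      simpa only [linForm_apply, one_smul] using hf
    refine ⟨_, ⟨_, rfl, hsum ▸ sum_smul_linForm_pow_mem_powSpan (fun _ => 1) fun j => (a j, b j)⟩,
      by simpa using Finset.card_image_le (s := .univ) (f := fun j => (a j, b j))⟩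
  · rintro _ ⟨T, rfl, hT⟩
    obtain ⟨r, hr, c, v, hc, hv, hf⟩ := exists_sum_smul_linForm_pow_eq hd hT
    choose w hw using fun j => IsAlgClosed.exists_pow_nat_eq (c j) hd.pos
    have hw₀ (j : Fin r) : w j ≠ 0 := fun h => hc j (by rw [← hw, h, zero_pow hd])
    refine ⟨r, ⟨fun j => (w j • v j).1, fun j => (w j • v j).2,
      fun j => smul_ne_zero (hw₀ j) (hv j), ?_⟩, hr⟩
    simp only [← hf, ← linForm_apply, map_smul, smul_pow, hw]

end Ranks

theorem stmt17_general (d k : ℕ) (f : MvPolynomial (Fin 2) ℝ) (hk : complexRank f d = k)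
    (hk0 : k ≠ 0) (hd : 3 ≤ d) :
    (realRank f d = k ∨ d - k + 2 ≤ realRank f d) ∧
    (k = 2 → realRank f d ≠ 2 → realRank f d = d) := by
  have hd₀ : d ≠ 0 := by omega
  rw [complexRank_eq_waringRank hd₀] at hk
  rw [realRank_eq_waringRank hd₀]
  have hf : f ∈ powSpan d (Set.univ : Set (ℝ × ℝ)) :=
    mem_powSpan_univ_of_map_mem hd₀ (mem_powSpan_univ_of_waringRank_ne_zero (hk ▸ hk0))
  constructor
  · have hle := waringRank_map_le (algebraMap ℝ ℂ) hf
    obtain heq | hlarge := waringRank_map_eq_or_le (algebraMap ℝ ℂ) hd₀ hf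
    · exact .inl (heq.symm.trans hk)
    · omega
  · rintro rfl hne
    exact (waringRank_eq_two_or_eq hd hk).resolve_left hne

/-- if a nonzero real binary form of degree `d` has complex rank `k`
with `2 ≤ k < ⌊d/2⌋ + 1`, then either its real rank is `k` or its real rank is at
least `d - k + 2`; moreover if `k = 2` and the real rank is not `2`, the real rank
is exactly `d - k + 2 = d`. -/
theorem stmt17 (d k : ℕ) (f : MvPolynomial (Fin 2) ℝ) (hf0 : f ≠ 0)
    (hf : f.IsHomogeneous d) (hk : complexRank f d = k)
    (hk2 : 2 ≤ k) (hkd : k < d / 2 + 1) :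
    (realRank f d = k ∨ d - k + 2 ≤ realRank f d) ∧
    (k = 2 → realRank f d ≠ 2 → realRank f d = d) := by
  exact stmt17_general d k f hk (by omega) (by omega)
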